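/- arXiv:2111.04691 — 2 statements merged into one kernel-verified Lean document; each statement's English description precedes it below -/
import Mathlib

section
/- Let V: ℝ → [0,∞) be an Orlicz function and R ∈ (0,∞). For a bounded continuous λ: ℝ → ℝ let α(λ) ∈ (-∞,0) be the unique solution of ∫ V e^{α(λ)V+λ} dx = R ∫ e^{α(λ)V+λ} dx, and set Λ_V(λ) := φ_V(α(λ),λ) − α(λ)R − φ_V(α(0),0) + α(0)R, where α(0) corresponds to λ ≡ 0. Then for every probability measure μ on ℝ, the Legendre transform sup_{λ ∈ C_b(ℝ)} [ ∫_ℝ λ dμ − Λ_V(λ) ] equals I_V(μ), where I_V(μ) := H(μ | μ_{V,α(0)}) + α(0)[m_V(μ) − R] if m_V(μ) ≤ R and I_V(μ) := ∞ otherwise. Moreover I_V is strictly convex on the set of probability measures where it is finite. -/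
open MeasureTheory Real Filter Topology ENNReal Classical

noncomputable section

/-- An Orlicz function: convex, symmetric, vanishing only at `0`, nonnegative. -/
def IsOrlicz (V : ℝ → ℝ) : Prop :=
  ConvexOn ℝ Set.univ V ∧ (∀ x, V (-x) = V x) ∧ V 0 = 0 ∧ (∀ x, x ≠ 0 → 0 < V x) ∧
    (∀ x, 0 ≤ V x)

/-- `φ_V(α, λ) = log ∫ e^{α V(x) + λ(x)} dx`. -/
def phiV (V lam : ℝ → ℝ) (α : ℝ) : ℝ := Real.log (∫ x : ℝ, Real.exp (α * V x + lam x))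

/-- The Gibbs measure `μ_{V,β}` with Lebesgue density `e^{βV(x)} / ∫ e^{βV}`. -/
def gibbs (V : ℝ → ℝ) (β : ℝ) : Measure ℝ :=
  volume.withDensity fun x =>
    ENNReal.ofReal (Real.exp (β * V x) / ∫ t : ℝ, Real.exp (β * V t))

/-- Relative entropy `H(μ|ν)`, valued in `EReal`; it is `⊤` unless `μ ≪ ν` and the
log-density is `μ`-integrable. -/

def relEnt (μ ν : Measure ℝ) : EReal :=
  if μ ≪ ν ∧ Integrable (fun x => Real.log (μ.rnDeriv ν x).toReal) μ
  then ((∫ x, Real.log (μ.rnDeriv ν x).toReal ∂μ : ℝ) : EReal) else ⊤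

/-- The `V`-moment `m_V(μ) = ∫ V dμ`, as a lower integral in `[0,∞]`. -/
def mV (V : ℝ → ℝ) (μ : Measure ℝ) : ℝ≥0∞ := ∫⁻ x, ENNReal.ofReal (V x) ∂μ

/-- The rate function `I_V`. -/

def rateI (V : ℝ → ℝ) (R α₀ : ℝ) (μ : Measure ℝ) : EReal :=
  if mV V μ ≤ ENNReal.ofReal R
  then relEnt μ (gibbs V α₀) + ((α₀ * ((mV V μ).toReal - R) : ℝ) : EReal)
  else ⊤

/-- The type of bounded continuous test functions. -/
def Cb : Type := {f : ℝ → ℝ // Continuous f ∧ ∃ C : ℝ, ∀ x, |f x| ≤ C}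

section EntropyDuality

open InformationTheory ProbabilityTheory

variable {α : Type*} {mα : MeasurableSpace α}

/-- Fatou's lemma for nonnegative real functions with bounded integrals. -/
lemma integrable_and_integral_le_of_tendsto {ν : Measure α} {F : ℕ → α → ℝ} {f : α → ℝ}
    {c : ℕ → ℝ} {K : ℝ} (hF : ∀ n, Integrable (F n) ν) (hF0 : ∀ n x, 0 ≤ F n x)
    (hlim : ∀ x, Tendsto (fun n => F n x) atTop (𝓝 (f x)))
    (hc : ∀ n, ∫ x, F n x ∂ν ≤ c n) (hcK : Tendsto c atTop (𝓝 K)) :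
    Integrable f ν ∧ ∫ x, f x ∂ν ≤ K := by
  have hf0 : ∀ x, 0 ≤ f x := fun x => ge_of_tendsto' (hlim x) fun n => hF0 n x
  have hfm : AEStronglyMeasurable f ν :=
    aestronglyMeasurable_of_tendsto_ae atTop (fun n => (hF n).1) (ae_of_all _ hlim)
  have hK0 : 0 ≤ K := ge_of_tendsto' hcK fun n => (integral_nonneg (hF0 n)).trans (hc n)
  have key : ∫⁻ x, ENNReal.ofReal (f x) ∂ν ≤ ENNReal.ofReal K := by
    calc ∫⁻ x, ENNReal.ofReal (f x) ∂ν
        = ∫⁻ x, liminf (fun n => ENNReal.ofReal (F n x)) atTop ∂ν := by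
          refine lintegral_congr fun x => ?_
          exact ((ENNReal.continuous_ofReal.tendsto _).comp (hlim x)).liminf_eq.symm
      _ ≤ liminf (fun n => ∫⁻ x, ENNReal.ofReal (F n x) ∂ν) atTop :=
          lintegral_liminf_le' fun n => (hF n).1.aemeasurable.ennreal_ofReal
      _ ≤ liminf (fun n => ENNReal.ofReal (c n)) atTop := by
          refine liminf_le_liminf (Eventually.of_forall fun n => ?_)
          rw [← ofReal_integral_eq_lintegral_ofReal (hF n) (ae_of_all _ (hF0 n))]
          exact ENNReal.ofReal_le_ofReal (hc n)
      _ = ENNReal.ofReal K := ((ENNReal.continuous_ofReal.tendsto _).comp hcK).liminf_eq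
  have hint : Integrable f ν := by
    refine ⟨hfm, ?_⟩
    rw [hasFiniteIntegral_iff_ofReal (ae_of_all _ hf0)]
    exact key.trans_lt ENNReal.ofReal_lt_top
  refine ⟨hint, ?_⟩
  rw [← ofReal_integral_eq_lintegral_ofReal hint (ae_of_all _ hf0)] at key
  exact (ENNReal.ofReal_le_ofReal_iff hK0).1 key

lemma abs_exp_sub_exp_le {C a b : ℝ} (ha : |a| ≤ C) (hb : |b| ≤ C) :
    |Real.exp a - Real.exp b| ≤ Real.exp C * |a - b| := by
  have aux : ∀ u v : ℝ, |u| ≤ C → |v| ≤ C → Real.exp u - Real.exp v ≤ Real.exp C * |u - v| := by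
    intro u v hu hv
    have h1 : Real.exp u * (v - u + 1) ≤ Real.exp v := by
      have h := Real.add_one_le_exp (v - u)
      calc Real.exp u * (v - u + 1) ≤ Real.exp u * Real.exp (v - u) := by gcongr
        _ = Real.exp v := by rw [← Real.exp_add]; congr 1; ring
    have h2 : Real.exp u * (u - v) ≤ Real.exp C * |u - v| := by
      have := (abs_le.1 hu).2
      calc Real.exp u * (u - v) ≤ Real.exp u * |u - v| := by gcongr; exact le_abs_self _
        _ ≤ _ := by gcongr
    linarith
  rw [abs_le]
  have h1 := aux a b ha hb
  have h2 := aux b a hb ha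
  rw [abs_sub_comm] at h2
  constructor <;> linarith

lemma integrable_of_abs_le_const {ν : Measure α} [IsFiniteMeasure ν] {f : α → ℝ} {C : ℝ}
    (hf : Measurable f) (hC : ∀ x, |f x| ≤ C) : Integrable f ν :=
  Integrable.of_bound hf.aestronglyMeasurable C (ae_of_all _ hC)

lemma integrable_exp_of_abs_le_const {ν : Measure α} [IsFiniteMeasure ν] {f : α → ℝ} {C : ℝ}
    (hf : Measurable f) (hC : ∀ x, |f x| ≤ C) : Integrable (fun x => Real.exp (f x)) ν := by
  refine integrable_of_abs_le_const (C := Real.exp C) hf.exp fun x => ?_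
  rw [abs_of_pos (Real.exp_pos _)]
  exact Real.exp_le_exp.2 (abs_le.1 (hC x)).2

lemma abs_clip_le {C a : ℝ} (hC : 0 ≤ C) : |max (-C) (min C a)| ≤ C :=
  abs_le.2 ⟨le_max_left _ _, max_le (by linarith) (min_le_left _ _)⟩

lemma abs_sub_clip_le {C a b : ℝ} (ha : |a| ≤ C) : |a - max (-C) (min C b)| ≤ |a - b| := by
  have h := abs_le.1 ha
  have ea : a = max (-C) (min C a) := by rw [min_eq_right h.2, max_eq_right h.1]
  conv_lhs => rw [ea]
  calc |max (-C) (min C a) - max (-C) (min C b)| ≤ |min C a - min C b| := by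
        simpa using abs_max_sub_max_le_max (-C) (min C a) (-C) (min C b)
    _ ≤ |a - b| := by simpa using abs_min_sub_min_le_max C a C b

/-- A Donsker–Varadhan bound for bounded continuous functions extends to bounded measurable
functions. -/
lemma integral_sub_log_le_of_continuous {μ ν : Measure ℝ} [IsProbabilityMeasure μ]
    [IsProbabilityMeasure ν] {K : ℝ}
    (h : ∀ g : ℝ → ℝ, Continuous g → (∃ C : ℝ, ∀ x, |g x| ≤ C) →
      ∫ x, g x ∂μ - Real.log (∫ x, Real.exp (g x) ∂ν) ≤ K)
    {f : ℝ → ℝ} (hf : Measurable f) {C : ℝ} (hC : ∀ x, |f x| ≤ C) :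
    ∫ x, f x ∂μ - Real.log (∫ x, Real.exp (f x) ∂ν) ≤ K := by
  have hC0 : 0 ≤ C := (abs_nonneg _).trans (hC 0)
  have hex : ∀ n : ℕ, ∃ g : ℝ → ℝ, Continuous g ∧ (∀ x, |g x| ≤ C) ∧
      ∫ x, |f x - g x| ∂(μ + ν) ≤ 1 / ((n : ℝ) + 1) := by
    intro n
    have hfi : Integrable f (μ + ν) := integrable_of_abs_le_const hf hC
    obtain ⟨g, hg, hgi⟩ := hfi.exists_boundedContinuous_integral_sub_le
      (ε := 1 / ((n : ℝ) + 1)) (by positivity)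
    have hcont : Continuous fun x => max (-C) (min C (g x)) := by fun_prop
    refine ⟨fun x => max (-C) (min C (g x)), hcont, fun x => abs_clip_le hC0,
      le_trans (integral_mono ?_ (hfi.sub hgi).norm fun x => abs_sub_clip_le (hC x)) hg⟩
    exact (hfi.sub (integrable_of_abs_le_const hcont.measurable fun x => abs_clip_le hC0)).abs
  choose g hgc hgb hg using hex
  have hlim0 : Tendsto (fun n : ℕ => 1 / ((n : ℝ) + 1)) atTop (𝓝 0) :=
    tendsto_one_div_add_atTop_nhds_zero_nat
  have hgi : ∀ n (ρ : Measure ℝ) [IsFiniteMeasure ρ], Integrable (g n) ρ := fun n ρ _ =>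
    integrable_of_abs_le_const (hgc n).measurable (hgb n)
  have hfi : ∀ (ρ : Measure ℝ) [IsFiniteMeasure ρ], Integrable f ρ := fun ρ _ =>
    integrable_of_abs_le_const hf hC
  have hdi : ∀ n (ρ : Measure ℝ) [IsFiniteMeasure ρ], Integrable (fun x => |f x - g n x|) ρ :=
    fun n ρ _ => ((hfi ρ).sub (hgi n ρ)).abs
  have hadd : ∀ n, ∫ x, |f x - g n x| ∂μ + ∫ x, |f x - g n x| ∂ν ≤ 1 / ((n : ℝ) + 1) := by
    intro n
    rw [← integral_add_measure (hdi n μ) (hdi n ν)]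
    exact hg n
  have hnn : ∀ n (ρ : Measure ℝ), 0 ≤ ∫ x, |f x - g n x| ∂ρ := fun n ρ =>
    integral_nonneg fun x => abs_nonneg _
  have hμ : Tendsto (fun n => ∫ x, g n x ∂μ) atTop (𝓝 (∫ x, f x ∂μ)) := by
    rw [tendsto_iff_dist_tendsto_zero]
    refine squeeze_zero (fun _ => dist_nonneg) (fun n => ?_) hlim0
    rw [Real.dist_eq, abs_sub_comm, ← integral_sub (hfi μ) (hgi n μ)]
    refine (abs_integral_le_integral_abs).trans ?_
    have := hadd n
    have := hnn n ν
    linarith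
  have hν : Tendsto (fun n => ∫ x, Real.exp (g n x) ∂ν) atTop (𝓝 (∫ x, Real.exp (f x) ∂ν)) := by
    rw [tendsto_iff_dist_tendsto_zero]
    have hlim1 : Tendsto (fun n : ℕ => Real.exp C * (1 / ((n : ℝ) + 1))) atTop (𝓝 0) := by
      simpa using hlim0.const_mul (Real.exp C)
    refine squeeze_zero (fun _ => dist_nonneg) (fun n => ?_) hlim1
    have hi1 := integrable_exp_of_abs_le_const (ν := ν) hf hC
    have hi2 := integrable_exp_of_abs_le_const (ν := ν) (hgc n).measurable (hgb n)
    rw [Real.dist_eq, abs_sub_comm, ← integral_sub hi1 hi2]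
    refine (abs_integral_le_integral_abs).trans ?_
    calc ∫ x, |Real.exp (f x) - Real.exp (g n x)| ∂ν
        ≤ ∫ x, Real.exp C * |f x - g n x| ∂ν :=
          integral_mono (hi1.sub hi2).abs ((hdi n ν).const_mul _)
            fun x => abs_exp_sub_exp_le (hC x) (hgb n x)
      _ = Real.exp C * ∫ x, |f x - g n x| ∂ν := integral_const_mul _ _
      _ ≤ _ := by
          gcongr
          have := hadd n
          have := hnn n μ
          linarith
  have hpos : 0 < ∫ x, Real.exp (f x) ∂ν :=
    integral_exp_pos (integrable_exp_of_abs_le_const hf hC)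
  exact le_of_tendsto' (hμ.sub (hν.log hpos.ne')) fun n => h _ (hgc n) ⟨C, hgb n⟩

lemma neg_one_le_mul_log_clip {x : ℝ} (hx : 0 ≤ x) {a b : ℝ} (hb : 1 ≤ b) :
    -1 ≤ x * Real.log (max a (min x b)) := by
  rcases hx.eq_or_lt with rfl | hx
  · simp
  have hmin : 0 < min x 1 := lt_min hx one_pos
  have h1 : Real.log (min x 1) ≤ Real.log (max a (min x b)) := by
    refine Real.log_le_log hmin (le_max_of_le_right ?_)
    exact min_le_min_left _ hb
  have h2 : -1 ≤ x * Real.log (min x 1) := by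
    rcases le_total x 1 with h | h
    · rw [min_eq_left h]
      have := Real.one_sub_inv_le_log_of_pos hx
      have h3 : x * (1 - x⁻¹) ≤ x * Real.log x := by gcongr
      rw [mul_sub, mul_inv_cancel₀ hx.ne'] at h3
      linarith
    · rw [min_eq_right h]; simp
  exact h2.trans (by gcongr)

/-- If the Donsker–Varadhan functional of `μ` relative to `ν` is bounded by `K` on bounded
measurable functions, then `μ ≪ ν` with relative entropy at most `K`. -/
lemma ac_and_integral_llr_le {μ ν : Measure α} [IsProbabilityMeasure μ]
    [IsProbabilityMeasure ν] {K : ℝ}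
    (h : ∀ f : α → ℝ, Measurable f → (∃ C : ℝ, ∀ x, |f x| ≤ C) →
      ∫ x, f x ∂μ - Real.log (∫ x, Real.exp (f x) ∂ν) ≤ K) :
    μ ≪ ν ∧ Integrable (llr μ ν) μ ∧ ∫ x, llr μ ν x ∂μ ≤ K := by
  have hac : μ ≪ ν := by
    refine Measure.AbsolutelyContinuous.mk fun s hs hνs => ?_
    by_contra hμs
    have hpos : 0 < μ.real s := ENNReal.toReal_pos hμs (measure_ne_top _ _)
    obtain ⟨k, hk⟩ := exists_nat_gt (K / μ.real s)
    have hb := h (s.indicator fun _ => (k : ℝ)) (measurable_const.indicator hs) ⟨k, fun x => by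
      by_cases hx : x ∈ s <;> simp [hx]⟩
    have h0 : (fun x => Real.exp (s.indicator (fun _ => (k : ℝ)) x)) =ᵐ[ν] fun _ => 1 := by
      filter_upwards [measure_eq_zero_iff_ae_notMem.1 hνs] with x hx
      simp [hx]
    rw [integral_congr_ae h0, integral_indicator_const _ hs] at hb
    simp only [integral_const, probReal_univ, smul_eq_mul, mul_one, Real.log_one, sub_zero] at hb
    rw [div_lt_iff₀ hpos] at hk
    linarith [mul_comm (k : ℝ) (μ.real s)]
  set r : α → ℝ := fun x => (μ.rnDeriv ν x).toReal with hr
  have hrm : Measurable r := (Measure.measurable_rnDeriv μ ν).ennreal_toReal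
  have hr0 : ∀ x, 0 ≤ r x := fun x => ENNReal.toReal_nonneg
  have hri : Integrable r ν := Measure.integrable_toReal_rnDeriv
  have hr1 : ∫ x, r x ∂ν = 1 := by simp [hr, Measure.integral_toReal_rnDeriv hac]
  let a : ℕ → ℝ := fun n => 1 / ((n : ℝ) + 1)
  let b : ℕ → ℝ := fun n => (n : ℝ) + 1
  have ha : ∀ n, 0 < a n := fun n => by positivity
  have hb : ∀ n, 1 ≤ b n := fun n => by simp [b]
  let L : ℕ → α → ℝ := fun n x => Real.log (max (a n) (min (r x) (b n)))
  have hLm : ∀ n, Measurable (L n) := fun n =>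
    (measurable_const.max (hrm.min measurable_const)).log
  have hLb : ∀ n x, |L n x| ≤ Real.log (b n) := by
    intro n x
    have hab : Real.log (a n) = - Real.log (b n) := by simp [a, b]
    have h1 : a n ≤ b n := by
      have : a n ≤ 1 := by
        simp only [a]; rw [div_le_one (by positivity)]; linarith [Nat.cast_nonneg (α := ℝ) n]
      exact this.trans (hb n)
    rw [abs_le]
    constructor
    · rw [← hab]; exact Real.log_le_log (ha n) (le_max_left _ _)
    · exact Real.log_le_log ((ha n).trans_le (le_max_left _ _)) (max_le h1 (min_le_right _ _))
  have hbound : ∀ n, ∫ x, r x * L n x + 1 ∂ν ≤ K + Real.log (1 + a n) + 1 := by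
    intro n
    have h1 := h (L n) (hLm n) ⟨_, hLb n⟩
    have hLi : Integrable (L n) μ := integrable_of_abs_le_const (hLm n) (hLb n)
    have hi := (integrable_toReal_rnDeriv_mul_iff hac).2 hLi
    rw [integral_add hi (integrable_const _), integral_toReal_rnDeriv_mul hac]
    have h2 : ∫ x, Real.exp (L n x) ∂ν ≤ 1 + a n := by
      calc ∫ x, Real.exp (L n x) ∂ν ≤ ∫ x, (r x + a n) ∂ν := by
            refine integral_mono (integrable_exp_of_abs_le_const (hLm n) (hLb n))
              (hri.add (integrable_const _)) fun x => ?_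
            simp only [L]
            rw [Real.exp_log ((ha n).trans_le (le_max_left _ _))]
            refine max_le ?_ ((min_le_left _ _).trans ?_)
            · linarith [hr0 x]
            · linarith [ha n]
        _ = 1 + a n := by rw [integral_add hri (integrable_const _), hr1]; simp
    have h3 : Real.log (∫ x, Real.exp (L n x) ∂ν) ≤ Real.log (1 + a n) :=
      Real.log_le_log (integral_exp_pos (integrable_exp_of_abs_le_const (hLm n) (hLb n))) h2
    simp only [integral_const, probReal_univ, smul_eq_mul, mul_one]
    linarith
  have ha0 : Tendsto a atTop (𝓝 0) := tendsto_one_div_add_atTop_nhds_zero_nat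
  have hb0 : Tendsto b atTop atTop :=
    tendsto_atTop_add_const_right _ _ tendsto_natCast_atTop_atTop
  have hcK : Tendsto (fun n => K + Real.log (1 + a n) + 1) atTop (𝓝 (K + 1)) := by
    have h1 : Tendsto (fun n => 1 + a n) atTop (𝓝 1) := by simpa using ha0.const_add 1
    have h2 := h1.log one_ne_zero
    simpa using (h2.const_add K).add_const 1
  have hlim : ∀ x, Tendsto (fun n => r x * L n x + 1) atTop (𝓝 (r x * Real.log (r x) + 1)) := by
    intro x
    rcases (hr0 x).eq_or_lt with h0 | h0
    · simp [← h0]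
    refine Tendsto.add_const _ (Tendsto.const_mul _ (Tendsto.log ?_ h0.ne'))
    refine tendsto_const_nhds.congr' ?_
    filter_upwards [hb0.eventually_ge_atTop (r x), ha0.eventually_lt_const h0] with n h1 h2
    rw [min_eq_left h1, max_eq_right h2.le]
  obtain ⟨hi, hle⟩ := integrable_and_integral_le_of_tendsto (ν := ν)
    (fun n => ((integrable_toReal_rnDeriv_mul_iff hac).2
      (integrable_of_abs_le_const (hLm n) (hLb n))).add (integrable_const (1 : ℝ)))
    (fun n x => by
      have := neg_one_le_mul_log_clip (a := a n) (hr0 x) (hb n)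
      change 0 ≤ r x * L n x + 1
      simp only [L]; linarith) hlim hbound hcK
  have hi' : Integrable (fun x => r x * Real.log (r x)) ν := by
    exact (hi.sub (integrable_const (1 : ℝ))).congr (ae_of_all _ fun x => by simp)
  refine ⟨hac, (integrable_rnDeriv_mul_log_iff hac).1 hi', ?_⟩
  rw [integral_add hi' (integrable_const _), integral_rnDeriv_mul_log hac] at hle
  simpa using hle

/-- The Donsker–Varadhan inequality. -/
lemma integral_sub_log_le_integral_llr {μ ν : Measure α} [IsProbabilityMeasure μ]
    [IsProbabilityMeasure ν] (hac : μ ≪ ν) (hint : Integrable (llr μ ν) μ) {f : α → ℝ}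
    (hfμ : Integrable f μ) (hfν : Integrable (fun x => Real.exp (f x)) ν) :
    ∫ x, f x ∂μ - Real.log (∫ x, Real.exp (f x) ∂ν) ≤ ∫ x, llr μ ν x ∂μ := by
  have := isProbabilityMeasure_tilted hfν
  have h1 := integral_llr_add_sub_measure_univ_nonneg
    (hac.trans (absolutelyContinuous_tilted hfν)) (integrable_llr_tilted_right hac hfμ hint hfν)
  rw [integral_llr_tilted_right hac hfμ hfν hint] at h1
  simp only [probReal_univ] at h1
  linarith

/-- Strict convexity of the relative entropy on probability measures. -/
lemma integral_llr_convexCombination_lt {μ ν γ : Measure α} [IsProbabilityMeasure μ]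
    [IsProbabilityMeasure ν] [IsProbabilityMeasure γ] (hne : μ ≠ ν)
    (hμ : μ ≪ γ) (hν : ν ≪ γ) (hμi : Integrable (llr μ γ) μ) (hνi : Integrable (llr ν γ) ν)
    {t : ℝ} (ht : t ∈ Set.Ioo (0 : ℝ) 1) :
    ENNReal.ofReal t • μ + ENNReal.ofReal (1 - t) • ν ≪ γ ∧
    Integrable (llr (ENNReal.ofReal t • μ + ENNReal.ofReal (1 - t) • ν) γ)
      (ENNReal.ofReal t • μ + ENNReal.ofReal (1 - t) • ν) ∧
    ∫ x, llr (ENNReal.ofReal t • μ + ENNReal.ofReal (1 - t) • ν) γ x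
      ∂(ENNReal.ofReal t • μ + ENNReal.ofReal (1 - t) • ν) <
      t * ∫ x, llr μ γ x ∂μ + (1 - t) * ∫ x, llr ν γ x ∂ν := by
  have ht1 : 0 < 1 - t := by linarith [ht.2]
  have hsum : t + (1 - t) = 1 := by ring
  have : IsFiniteMeasure (ENNReal.ofReal t • μ) := Measure.smul_finite _ ENNReal.ofReal_ne_top
  have : IsFiniteMeasure (ENNReal.ofReal (1 - t) • ν) :=
    Measure.smul_finite _ ENNReal.ofReal_ne_top
  set ρ := ENNReal.ofReal t • μ + ENNReal.ofReal (1 - t) • ν with hρ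
  have hρp : IsProbabilityMeasure ρ := ⟨by
    simp [hρ, ← ENNReal.ofReal_add ht.1.le ht1.le]⟩
  have hac : ρ ≪ γ := (hμ.smul_left _).add_left (hν.smul_left _)
  have hd : ∀ᵐ x ∂γ, (ρ.rnDeriv γ x).toReal
      = t * (μ.rnDeriv γ x).toReal + (1 - t) * (ν.rnDeriv γ x).toReal := by
    filter_upwards [Measure.rnDeriv_add (ENNReal.ofReal t • μ) (ENNReal.ofReal (1 - t) • ν) γ,
      Measure.rnDeriv_smul_left_of_ne_top μ γ (r := ENNReal.ofReal t) ENNReal.ofReal_ne_top,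
      Measure.rnDeriv_smul_left_of_ne_top ν γ (r := ENNReal.ofReal (1 - t)) ENNReal.ofReal_ne_top,
      Measure.rnDeriv_ne_top μ γ, Measure.rnDeriv_ne_top ν γ] with x h1 h2 h3 h4 h5
    rw [h1, Pi.add_apply, h2, h3, Pi.smul_apply, Pi.smul_apply, smul_eq_mul, smul_eq_mul,
      ENNReal.toReal_add (ENNReal.mul_ne_top ENNReal.ofReal_ne_top h4)
        (ENNReal.mul_ne_top ENNReal.ofReal_ne_top h5),
      ENNReal.toReal_mul, ENNReal.toReal_mul, ENNReal.toReal_ofReal ht.1.le,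
      ENNReal.toReal_ofReal ht1.le]
  have hkμ := (integrable_klFun_rnDeriv_iff hμ).2 hμi
  have hkν := (integrable_klFun_rnDeriv_iff hν).2 hνi
  have hkm := (hkμ.const_mul t).add (hkν.const_mul (1 - t))
  have hle : ∀ᵐ x ∂γ, klFun (ρ.rnDeriv γ x).toReal
      ≤ t * klFun (μ.rnDeriv γ x).toReal + (1 - t) * klFun (ν.rnDeriv γ x).toReal := by
    filter_upwards [hd] with x hx
    rw [hx]
    exact convexOn_klFun.2 ENNReal.toReal_nonneg ENNReal.toReal_nonneg ht.1.le ht1.le hsum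
  have hkρ : Integrable (fun x => klFun (ρ.rnDeriv γ x).toReal) γ := by
    refine hkm.mono' ((measurable_klFun.comp
      (Measure.measurable_rnDeriv _ _).ennreal_toReal).aestronglyMeasurable) ?_
    filter_upwards [hle] with x hx
    rw [Real.norm_of_nonneg (klFun_nonneg ENNReal.toReal_nonneg)]
    exact hx
  have hρi := (integrable_klFun_rnDeriv_iff hac).1 hkρ
  refine ⟨hac, hρi, ?_⟩
  have e1 := integral_klFun_rnDeriv hμ hμi
  have e2 := integral_klFun_rnDeriv hν hνi
  have e3 := integral_klFun_rnDeriv hac hρi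
  simp only [probReal_univ, add_sub_cancel_right] at e1 e2 e3
  rw [← e1, ← e2, ← e3, ← integral_const_mul, ← integral_const_mul,
    ← integral_add (hkμ.const_mul t) (hkν.const_mul (1 - t))]
  refine lt_of_le_of_ne (integral_mono_ae hkρ hkm hle) fun heq => hne ?_
  have hae := (integral_eq_iff_of_ae_le hkρ hkm hle).1 heq
  have hdens : μ.rnDeriv γ =ᵐ[γ] ν.rnDeriv γ := by
    filter_upwards [hae, hd, Measure.rnDeriv_ne_top μ γ, Measure.rnDeriv_ne_top ν γ]
      with x h1 h2 h3 h4
    by_contra hcon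
    have hcon' : (μ.rnDeriv γ x).toReal ≠ (ν.rnDeriv γ x).toReal := fun h =>
      hcon ((ENNReal.toReal_eq_toReal_iff' h3 h4).1 h)
    have hlt := strictConvexOn_klFun.2 (Set.mem_Ici.2 ENNReal.toReal_nonneg)
      (Set.mem_Ici.2 ENNReal.toReal_nonneg) hcon' ht.1 ht1 hsum
    simp only [smul_eq_mul] at hlt
    rw [← h2] at hlt
    exact hlt.ne h1
  rw [← Measure.withDensity_rnDeriv_eq μ γ hμ, ← Measure.withDensity_rnDeriv_eq ν γ hν]
  exact withDensity_congr_ae hdens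

end EntropyDuality

section Orlicz

open InformationTheory ProbabilityTheory

variable {V : ℝ → ℝ}

lemma IsOrlicz.continuous (hV : IsOrlicz V) : Continuous V :=
  continuousOn_univ.1 (hV.1.continuousOn isOpen_univ)

lemma IsOrlicz.nonneg (hV : IsOrlicz V) (x : ℝ) : 0 ≤ V x := hV.2.2.2.2 x

lemma IsOrlicz.linear_le (hV : IsOrlicz V) (x : ℝ) : V 1 * (|x| - 1) ≤ V x := by
  have h1 : 0 < V 1 := hV.2.2.2.1 1 one_ne_zero
  have habs : V |x| = V x := by
    rcases abs_choice x with h | h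
    · rw [h]
    · rw [h, hV.2.1]
  rcases le_total |x| 1 with hx | hx
  · exact (mul_nonpos_of_nonneg_of_nonpos h1.le (by linarith)).trans (hV.nonneg x)
  · have hx0 : 0 < |x| := by linarith
    have h := hV.1.2 (Set.mem_univ |x|) (Set.mem_univ 0) (inv_nonneg.2 hx0.le)
      (sub_nonneg.2 (inv_le_one_of_one_le₀ hx)) (by ring)
    simp only [smul_eq_mul, mul_zero, add_zero, hV.2.2.1, inv_mul_cancel₀ hx0.ne', habs] at h
    rw [inv_mul_eq_div, le_div_iff₀ hx0] at h
    linarith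

lemma integrable_exp_neg_mul_abs {b : ℝ} (hb : 0 < b) :
    Integrable fun x : ℝ => Real.exp (-b * |x|) := by
  have h : Integrable (Set.indicator (Set.Ioi 0) fun x : ℝ => Real.exp (-b * x)) :=
    (exp_neg_integrableOn_Ioi 0 hb).integrable_indicator measurableSet_Ioi
  refine (h.add h.comp_neg).congr ?_
  filter_upwards [compl_mem_ae_iff.2 (measure_singleton (0 : ℝ))] with x hx
  rcases lt_or_gt_of_ne (show x ≠ 0 from hx) with h0 | h0
  · simp [h0, h0.le, abs_of_neg h0]
  · simp [h0, h0.le, abs_of_pos h0]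

lemma IsOrlicz.integrable_exp (hV : IsOrlicz V) {a : ℝ} (ha : a < 0) {lam : ℝ → ℝ}
    (hl : Continuous lam) {C : ℝ} (hC : ∀ x, |lam x| ≤ C) :
    Integrable fun x : ℝ => Real.exp (a * V x + lam x) := by
  have hcV := hV.continuous
  have h1 : 0 < V 1 := hV.2.2.2.1 1 one_ne_zero
  have hb : 0 < -a * V 1 := mul_pos (neg_pos.2 ha) h1
  refine ((integrable_exp_neg_mul_abs hb).const_mul (Real.exp (C - a * V 1))).mono'
    (by fun_prop) (ae_of_all _ fun x => ?_)
  rw [Real.norm_of_nonneg (Real.exp_pos _).le, ← Real.exp_add]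
  refine Real.exp_le_exp.2 ?_
  have := hV.linear_le x
  have := (abs_le.1 (hC x)).2
  nlinarith

/-- A critical point of `a ↦ φ_V(a, λ) - a R` is a global minimizer on `(-∞, 0)`. -/
lemma phiV_sub_le_of_integral_eq (hV : IsOrlicz V) {R a b : ℝ} (hR : 0 < R) (ha : a < 0)
    (hb : b < 0) {lam : ℝ → ℝ} (hl : Continuous lam) (hC : ∃ C : ℝ, ∀ x, |lam x| ≤ C)
    (h : ∫ x, V x * Real.exp (a * V x + lam x) = R * ∫ x, Real.exp (a * V x + lam x)) :
    phiV V lam a - a * R ≤ phiV V lam b - b * R := by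
  obtain ⟨C, hC⟩ := hC
  have hia := hV.integrable_exp ha hl hC
  have hib := hV.integrable_exp hb hl hC
  have hpa : 0 < ∫ x, Real.exp (a * V x + lam x) := integral_exp_pos hia
  have hiV : Integrable fun x => V x * Real.exp (a * V x + lam x) := by
    by_contra hn
    rw [integral_undef hn] at h
    exact (mul_pos hR hpa).ne h
  have key : Real.exp ((b - a) * R) * ∫ x, Real.exp (a * V x + lam x)
      ≤ ∫ x, Real.exp (b * V x + lam x) := by
    calc Real.exp ((b - a) * R) * ∫ x, Real.exp (a * V x + lam x)
        = Real.exp ((b - a) * R) * ((1 - (b - a) * R) * (∫ x, Real.exp (a * V x + lam x))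
            + (b - a) * ∫ x, V x * Real.exp (a * V x + lam x)) := by rw [h]; ring
      _ = ∫ x, Real.exp ((b - a) * R) * ((1 - (b - a) * R) * Real.exp (a * V x + lam x)
            + (b - a) * (V x * Real.exp (a * V x + lam x))) := by
          rw [integral_const_mul, integral_add (hia.const_mul _) (hiV.const_mul _),
            integral_const_mul, integral_const_mul]
      _ ≤ ∫ x, Real.exp (b * V x + lam x) := by
          refine integral_mono (((hia.const_mul _).add (hiV.const_mul _)).const_mul _) hib
            fun x => ?_
          have h1 := Real.add_one_le_exp ((b - a) * V x - (b - a) * R)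
          calc Real.exp ((b - a) * R) * ((1 - (b - a) * R) * Real.exp (a * V x + lam x)
                + (b - a) * (V x * Real.exp (a * V x + lam x)))
              = Real.exp ((b - a) * R) * Real.exp (a * V x + lam x)
                * ((b - a) * V x - (b - a) * R + 1) := by ring
            _ ≤ Real.exp ((b - a) * R) * Real.exp (a * V x + lam x)
                * Real.exp ((b - a) * V x - (b - a) * R) := by gcongr
            _ = Real.exp (b * V x + lam x) := by
                rw [← Real.exp_add, ← Real.exp_add]; congr 1; ring
  have hlog := Real.log_le_log (by positivity) key
  rw [Real.log_mul (Real.exp_pos _).ne' hpa.ne', Real.log_exp] at hlog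
  simp only [phiV]
  linarith

lemma gibbs_eq_tilted (V : ℝ → ℝ) (β : ℝ) :
    gibbs V β = (volume : Measure ℝ).tilted fun x => β * V x := rfl

lemma IsOrlicz.integrable_exp_mul (hV : IsOrlicz V) {a : ℝ} (ha : a < 0) :
    Integrable fun x : ℝ => Real.exp (a * V x) := by
  simpa using hV.integrable_exp ha (lam := fun _ => 0) continuous_const (C := 0) (by simp)

lemma IsOrlicz.isProbabilityMeasure_gibbs (hV : IsOrlicz V) {β : ℝ} (hβ : β < 0) :
    IsProbabilityMeasure (gibbs V β) := by
  rw [gibbs_eq_tilted]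
  exact isProbabilityMeasure_tilted (hV.integrable_exp_mul hβ)

/-- Exponential integrals under the Gibbs measure in terms of Lebesgue integrals. -/
lemma log_integral_exp_gibbs (hV : IsOrlicz V) {a β : ℝ} (ha : a < 0) (hβ : β < 0)
    {lam : ℝ → ℝ} (hl : Continuous lam) (hC : ∃ C : ℝ, ∀ x, |lam x| ≤ C) :
    Integrable (fun x => Real.exp ((a - β) * V x + lam x)) (gibbs V β) ∧
    Real.log (∫ x, Real.exp ((a - β) * V x + lam x) ∂gibbs V β)
      = phiV V lam a - phiV V (fun _ => 0) β := by
  obtain ⟨C, hC⟩ := hC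
  have hia := hV.integrable_exp ha hl hC
  have hib := hV.integrable_exp_mul hβ
  have heq : ∀ x, β * V x + ((a - β) * V x + lam x) = a * V x + lam x := fun x => by ring
  constructor
  · rw [gibbs_eq_tilted, integrable_tilted_iff hib]
    simpa only [smul_eq_mul, ← Real.exp_add, heq] using hia
  · rw [gibbs_eq_tilted, integral_exp_tilted]
    simp only [Pi.add_apply, heq]
    rw [Real.log_div (integral_exp_pos hia).ne' (integral_exp_pos hib).ne']
    simp [phiV]

lemma relEnt_eq_of_ac {μ ν : Measure ℝ} (hac : μ ≪ ν) (hint : Integrable (llr μ ν) μ) :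
    relEnt μ ν = ((∫ x, llr μ ν x ∂μ : ℝ) : EReal) := if_pos ⟨hac, hint⟩

lemma ac_and_integrable_of_relEnt_ne_top {μ ν : Measure ℝ} (h : relEnt μ ν ≠ ⊤) :
    μ ≪ ν ∧ Integrable (llr μ ν) μ := by
  by_contra hcon
  exact h (if_neg hcon)

lemma finite_of_rateI_ne_top {R a : ℝ} {μ : Measure ℝ} (h : rateI V R a μ ≠ ⊤) :
    mV V μ ≤ ENNReal.ofReal R ∧ relEnt μ (gibbs V a) ≠ ⊤ := by
  unfold rateI at h
  split_ifs at h with hm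
  · exact ⟨hm, fun hr => h (by rw [hr, EReal.top_add_coe])⟩
  · exact absurd rfl h

lemma rateI_eq_coe {R a : ℝ} {μ : Measure ℝ} (hm : mV V μ ≤ ENNReal.ofReal R)
    (hac : μ ≪ gibbs V a) (hint : Integrable (llr μ (gibbs V a)) μ) :
    rateI V R a μ
      = ((∫ x, llr μ (gibbs V a) x ∂μ + a * ((mV V μ).toReal - R) : ℝ) : EReal) := by
  rw [rateI, if_pos hm, relEnt_eq_of_ac hac hint, EReal.coe_add]

lemma IsOrlicz.integrable_of_mV_ne_top (hV : IsOrlicz V) {μ : Measure ℝ} (h : mV V μ ≠ ⊤) :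
    Integrable V μ := by
  refine ⟨hV.continuous.aestronglyMeasurable, ?_⟩
  rw [hasFiniteIntegral_iff_ofReal (ae_of_all _ hV.nonneg)]
  exact lt_top_iff_ne_top.2 h

lemma IsOrlicz.toReal_mV (hV : IsOrlicz V) (μ : Measure ℝ) :
    (mV V μ).toReal = ∫ x, V x ∂μ :=
  (integral_eq_lintegral_of_nonneg_ae (ae_of_all _ hV.nonneg)
    hV.continuous.aestronglyMeasurable).symm

lemma rateI_strictConvex (hV : IsOrlicz V) {R a : ℝ} (ha : a < 0)
    {μ ν : Measure ℝ} [IsProbabilityMeasure μ] [IsProbabilityMeasure ν] (hne : μ ≠ ν)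
    (hμ : rateI V R a μ ≠ ⊤) (hν : rateI V R a ν ≠ ⊤) {t : ℝ} (ht : t ∈ Set.Ioo (0 : ℝ) 1) :
    rateI V R a (ENNReal.ofReal t • μ + ENNReal.ofReal (1 - t) • ν)
      < ((t * (rateI V R a μ).toReal + (1 - t) * (rateI V R a ν).toReal : ℝ) : EReal) := by
  have := hV.isProbabilityMeasure_gibbs ha
  obtain ⟨hmμ, hrμ⟩ := finite_of_rateI_ne_top hμ
  obtain ⟨hmν, hrν⟩ := finite_of_rateI_ne_top hν
  obtain ⟨hacμ, hiμ⟩ := ac_and_integrable_of_relEnt_ne_top hrμ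
  obtain ⟨hacν, hiν⟩ := ac_and_integrable_of_relEnt_ne_top hrν
  obtain ⟨hac, hi, hlt⟩ := integral_llr_convexCombination_lt hne hacμ hacν hiμ hiν ht
  have ht1 : 0 < 1 - t := by linarith [ht.2]
  have hmv : mV V (ENNReal.ofReal t • μ + ENNReal.ofReal (1 - t) • ν)
      = ENNReal.ofReal t * mV V μ + ENNReal.ofReal (1 - t) * mV V ν := by
    simp [mV, lintegral_add_measure, lintegral_smul_measure]
  have hmμ' : mV V μ ≠ ⊤ := (hmμ.trans_lt ENNReal.ofReal_lt_top).ne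
  have hmν' : mV V ν ≠ ⊤ := (hmν.trans_lt ENNReal.ofReal_lt_top).ne
  have hm : mV V (ENNReal.ofReal t • μ + ENNReal.ofReal (1 - t) • ν) ≤ ENNReal.ofReal R := by
    calc _ = _ := hmv
      _ ≤ ENNReal.ofReal t * ENNReal.ofReal R + ENNReal.ofReal (1 - t) * ENNReal.ofReal R := by
        gcongr
      _ = ENNReal.ofReal R := by
        rw [← add_mul, ← ENNReal.ofReal_add ht.1.le ht1.le]; simp
  have hmr : (mV V (ENNReal.ofReal t • μ + ENNReal.ofReal (1 - t) • ν)).toReal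
      = t * (mV V μ).toReal + (1 - t) * (mV V ν).toReal := by
    rw [hmv, ENNReal.toReal_add (ENNReal.mul_ne_top ENNReal.ofReal_ne_top hmμ')
        (ENNReal.mul_ne_top ENNReal.ofReal_ne_top hmν'),
      ENNReal.toReal_mul, ENNReal.toReal_mul, ENNReal.toReal_ofReal ht.1.le,
      ENNReal.toReal_ofReal ht1.le]
  rw [rateI_eq_coe hm hac hi, rateI_eq_coe hmμ hacμ hiμ, rateI_eq_coe hmν hacν hiν,
    EReal.toReal_coe, EReal.toReal_coe, EReal.coe_lt_coe_iff, hmr]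
  linear_combination hlt

/-- The easy half of the duality: each test function is dominated by the rate function. -/
lemma integral_sub_phiV_le_rateI (hV : IsOrlicz V) {R a b : ℝ} (hR : 0 < R) (ha : a < 0)
    (hb : b < 0) {μ : Measure ℝ} [IsProbabilityMeasure μ] {lam : ℝ → ℝ} (hl : Continuous lam)
    (hC : ∃ C : ℝ, ∀ x, |lam x| ≤ C) :
    (((∫ x, lam x ∂μ) - (phiV V lam b - b * R - phiV V (fun _ => 0) a + a * R) : ℝ) : EReal)
      ≤ rateI V R a μ := by
  by_cases htop : rateI V R a μ = ⊤
  · rw [htop]; exact le_top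
  have := hV.isProbabilityMeasure_gibbs ha
  obtain ⟨hm, hr⟩ := finite_of_rateI_ne_top htop
  obtain ⟨hac, hi⟩ := ac_and_integrable_of_relEnt_ne_top hr
  rw [rateI_eq_coe hm hac hi, EReal.coe_le_coe_iff, hV.toReal_mV]
  have hiV := hV.integrable_of_mV_ne_top (hm.trans_lt ENNReal.ofReal_lt_top).ne
  have hmR : ∫ x, V x ∂μ ≤ R := by
    rw [← hV.toReal_mV]
    exact ENNReal.toReal_le_of_le_ofReal hR.le hm
  obtain ⟨hig, hlog⟩ := log_integral_exp_gibbs hV hb ha hl hC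
  obtain ⟨C, hC⟩ := hC
  have hil : Integrable lam μ := integrable_of_abs_le_const hl.measurable hC
  have hDV := integral_sub_log_le_integral_llr hac hi ((hiV.const_mul (b - a)).add hil) hig
  simp only [Pi.add_apply] at hDV
  rw [hlog, integral_add (hiV.const_mul _) hil, integral_const_mul] at hDV
  nlinarith

/-- If the dual functional is bounded above then the `V`-moment constraint holds. -/
lemma mV_le_of_forall_le (hV : IsOrlicz V) {R K : ℝ} {μ : Measure ℝ} [IsProbabilityMeasure μ]
    (h : ∀ lam : ℝ → ℝ, Continuous lam → (∃ C : ℝ, ∀ x, |lam x| ≤ C) → ∀ b < 0,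
      ∫ x, lam x ∂μ - phiV V lam b + b * R ≤ K) :
    mV V μ ≤ ENNReal.ofReal R := by
  have hcV := hV.continuous
  have hbd : ∀ N x, |min (V x) (N : ℕ)| ≤ N := fun N x => by
    rw [abs_of_nonneg (le_min (hV.nonneg x) N.cast_nonneg)]; exact min_le_right _ _
  have hcm : ∀ N : ℕ, Continuous fun x => min (V x) (N : ℝ) := fun N => by fun_prop
  have hN : ∀ N : ℕ, ∫ x, min (V x) (N : ℝ) ∂μ ≤ R := by
    intro N
    by_contra! hcon
    set δ := ∫ x, min (V x) (N : ℝ) ∂μ - R with hδ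
    have hδ0 : 0 < δ := by linarith
    obtain ⟨k, hk⟩ := exists_nat_gt ((K + R + phiV V (fun _ => 0) (-1)) / δ)
    rw [div_lt_iff₀ hδ0] at hk
    have hlc : Continuous fun x => (k : ℝ) * min (V x) (N : ℝ) := continuous_const.mul (hcm N)
    have hlb : ∀ x, |(k : ℝ) * min (V x) (N : ℝ)| ≤ k * N := fun x => by
      rw [abs_mul, Nat.abs_cast]; exact mul_le_mul_of_nonneg_left (hbd N x) k.cast_nonneg
    have hneg : -(k : ℝ) - 1 < 0 := by linarith [Nat.cast_nonneg (α := ℝ) k]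
    have h1 := h _ hlc ⟨_, hlb⟩ (-(k : ℝ) - 1) hneg
    have hi := hV.integrable_exp hneg hlc hlb
    have h2 : phiV V (fun x => (k : ℝ) * min (V x) (N : ℝ)) (-(k : ℝ) - 1)
        ≤ phiV V (fun _ => 0) (-1) := by
      refine Real.log_le_log (integral_exp_pos hi) (integral_mono hi ?_ fun x => ?_)
      · simpa using hV.integrable_exp_mul (a := -1) (by norm_num)
      · refine Real.exp_le_exp.2 ?_
        have := mul_le_mul_of_nonneg_left (min_le_left (V x) (N : ℝ)) (Nat.cast_nonneg (α := ℝ) k)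
        linarith
    rw [integral_const_mul] at h1
    nlinarith
  have hmono : Tendsto (fun N : ℕ => ∫⁻ x, ENNReal.ofReal (min (V x) (N : ℝ)) ∂μ) atTop
      (𝓝 (mV V μ)) := by
    refine lintegral_tendsto_of_tendsto_of_monotone
      (fun N => (hcm N).measurable.ennreal_ofReal.aemeasurable) (ae_of_all _ fun x => ?_)
      (ae_of_all _ fun x => ?_)
    · intro N M hNM
      exact ENNReal.ofReal_le_ofReal (min_le_min_left _ (Nat.cast_le.2 hNM))
    · refine tendsto_const_nhds.congr' ?_
      filter_upwards [tendsto_natCast_atTop_atTop.eventually_ge_atTop (V x)] with N hN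
      rw [min_eq_left hN]
  refine le_of_tendsto' hmono fun N => ?_
  rw [← ofReal_integral_eq_lintegral_ofReal
    (integrable_of_abs_le_const (hcm N).measurable (hbd N))
    (ae_of_all _ fun x => le_min (hV.nonneg x) N.cast_nonneg)]
  exact ENNReal.ofReal_le_ofReal (hN N)

/-- If the dual functional is bounded above, the Donsker–Varadhan functional relative to the
Gibbs measure is bounded above. -/
lemma integral_sub_log_gibbs_le (hV : IsOrlicz V) {R K a : ℝ} (ha : a < 0) {μ : Measure ℝ}
    [IsProbabilityMeasure μ] (hiV : Integrable V μ)
    (h : ∀ lam : ℝ → ℝ, Continuous lam → (∃ C : ℝ, ∀ x, |lam x| ≤ C) → ∀ b < 0,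
      ∫ x, lam x ∂μ - phiV V lam b + b * R ≤ K)
    {lam : ℝ → ℝ} (hl : Continuous lam) (hC : ∃ C : ℝ, ∀ x, |lam x| ≤ C) :
    ∫ x, lam x ∂μ - Real.log (∫ x, Real.exp (lam x) ∂gibbs V a)
      ≤ K + phiV V (fun _ => 0) a - a * ∫ x, V x ∂μ := by
  have hcV := hV.continuous
  have hlog := (log_integral_exp_gibbs hV ha ha hl hC).2
  simp only [sub_self, zero_mul, zero_add] at hlog
  rw [hlog]
  obtain ⟨C, hC⟩ := hC
  have hil : Integrable lam μ := integrable_of_abs_le_const hl.measurable hC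
  have hbd : ∀ N x, |min (V x) (N : ℕ)| ≤ N := fun N x => by
    rw [abs_of_nonneg (le_min (hV.nonneg x) N.cast_nonneg)]; exact min_le_right _ _
  have hcm : ∀ N : ℕ, Continuous fun x => min (V x) (N : ℝ) := fun N => by fun_prop
  have hpt : ∀ x, Tendsto (fun N : ℕ => min (V x) (N : ℝ)) atTop (𝓝 (V x)) := fun x => by
    refine tendsto_const_nhds.congr' ?_
    filter_upwards [tendsto_natCast_atTop_atTop.eventually_ge_atTop (V x)] with N hN
    rw [min_eq_left hN]
  have hstep : ∀ b ∈ Set.Ioo a 0,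
      ∫ x, lam x ∂μ + (a - b) * ∫ x, V x ∂μ - phiV V lam a + b * R ≤ K := by
    intro b hb
    have hlN : ∀ N : ℕ, Continuous fun x => lam x + (a - b) * min (V x) (N : ℝ) := fun N =>
      hl.add (continuous_const.mul (hcm N))
    have hlNb : ∀ (N : ℕ) x, |lam x + (a - b) * min (V x) (N : ℝ)| ≤ C + |a - b| * N :=
      fun N x => (abs_add_le _ _).trans (add_le_add (hC x) (by
        rw [abs_mul]; exact mul_le_mul_of_nonneg_left (hbd N x) (abs_nonneg _)))
    have h1 : Tendsto (fun N : ℕ => ∫ x, min (V x) (N : ℝ) ∂μ) atTop (𝓝 (∫ x, V x ∂μ)) := by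
      refine tendsto_integral_of_dominated_convergence V
        (fun N => (hcm N).aestronglyMeasurable) hiV (fun N => ae_of_all _ fun x => ?_)
        (ae_of_all _ hpt)
      rw [Real.norm_of_nonneg (le_min (hV.nonneg x) N.cast_nonneg)]
      exact min_le_left _ _
    have h2 : Tendsto (fun N : ℕ => ∫ x, Real.exp (b * V x + (lam x + (a - b) * min (V x) (N : ℝ))))
        atTop (𝓝 (∫ x, Real.exp (a * V x + lam x))) := by
      refine tendsto_integral_of_dominated_convergence (fun x => Real.exp (b * V x + lam x))
        (fun N => (Real.continuous_exp.comp
          ((continuous_const.mul hcV).add (hlN N))).aestronglyMeasurable)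
        (hV.integrable_exp hb.2 hl hC)
        (fun N => ae_of_all _ fun x => ?_) (ae_of_all _ fun x => ?_)
      · rw [Real.norm_of_nonneg (Real.exp_pos _).le]
        refine Real.exp_le_exp.2 ?_
        have := mul_nonpos_of_nonpos_of_nonneg (sub_nonpos.2 hb.1.le)
          (le_min (hV.nonneg x) (Nat.cast_nonneg (α := ℝ) N))
        linarith
      · have heq : a * V x + lam x = b * V x + (lam x + (a - b) * V x) := by ring
        rw [heq]
        exact (Real.continuous_exp.tendsto _).comp
          ((((hpt x).const_mul (a - b)).const_add (lam x)).const_add (b * V x))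
    have hpos : 0 < ∫ x, Real.exp (a * V x + lam x) :=
      integral_exp_pos (hV.integrable_exp ha hl hC)
    have h3 := (((h1.const_mul (a - b)).const_add (∫ x, lam x ∂μ)).sub
      (h2.log hpos.ne')).add_const (b * R)
    refine le_of_tendsto' h3 fun N => ?_
    have h4 := h _ (hlN N) ⟨_, hlNb N⟩ b hb.2
    rw [integral_add hil ((integrable_of_abs_le_const (hcm N).measurable (hbd N)).const_mul _),
      integral_const_mul] at h4
    exact h4
  have hlim : Tendsto (fun b : ℝ => ∫ x, lam x ∂μ + (a - b) * ∫ x, V x ∂μ - phiV V lam a + b * R)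
      (𝓝[<] 0) (𝓝 (∫ x, lam x ∂μ + (a - 0) * ∫ x, V x ∂μ - phiV V lam a + 0 * R)) :=
    (Continuous.tendsto (by fun_prop) 0).mono_left nhdsWithin_le_nhds
  have hfin := le_of_tendsto hlim (by
    filter_upwards [Ioo_mem_nhdsLT ha] with b hb using hstep b hb)
  simp only [sub_zero, zero_mul, add_zero] at hfin
  linarith

/-- The hard half of the duality. -/
lemma rateI_le_of_forall_le (hV : IsOrlicz V) {R K a : ℝ} (ha : a < 0) {μ : Measure ℝ}
    [IsProbabilityMeasure μ]
    (h : ∀ lam : ℝ → ℝ, Continuous lam → (∃ C : ℝ, ∀ x, |lam x| ≤ C) → ∀ b < 0,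
      ∫ x, lam x ∂μ - phiV V lam b + b * R ≤ K) :
    rateI V R a μ ≤ ((K + phiV V (fun _ => 0) a - a * R : ℝ) : EReal) := by
  have := hV.isProbabilityMeasure_gibbs ha
  have hm := mV_le_of_forall_le hV h
  have hiV := hV.integrable_of_mV_ne_top (hm.trans_lt ENNReal.ofReal_lt_top).ne
  obtain ⟨hac, hi, hle⟩ := ac_and_integral_llr_le (μ := μ) (ν := gibbs V a)
    fun f hf ⟨_, hC⟩ => integral_sub_log_le_of_continuous
      (fun g hg hgC => integral_sub_log_gibbs_le hV ha hiV h hg hgC) hf hC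
  rw [rateI_eq_coe hm hac hi, EReal.coe_le_coe_iff, hV.toReal_mV]
  linarith

end Orlicz

/-- The Legendre transform over `C_b(ℝ)` of the Gärtner–Ellis limit `Λ_V` equals the rate
function `I_V`, which is moreover strictly convex where finite. -/
theorem stmt4 (V : ℝ → ℝ) (hV : IsOrlicz V) (R : ℝ) (hR : 0 < R)
    (alph : (ℝ → ℝ) → ℝ)
    (halph : ∀ lam : ℝ → ℝ, Continuous lam → (∃ C : ℝ, ∀ x, |lam x| ≤ C) →
      alph lam < 0 ∧
        (∫ x : ℝ, V x * Real.exp (alph lam * V x + lam x))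
          = R * ∫ x : ℝ, Real.exp (alph lam * V x + lam x)) :
    (∀ μ : Measure ℝ, IsProbabilityMeasure μ →
      (⨆ lam : Cb, (((∫ x, lam.1 x ∂μ) -
          (phiV V lam.1 (alph lam.1) - alph lam.1 * R
            - phiV V (fun _ => 0) (alph fun _ => 0) + (alph fun _ => 0) * R) : ℝ) : EReal))
        = rateI V R (alph fun _ => 0) μ) ∧
    -- strict convexity of `I_V` where finite
    (∀ μ ν : Measure ℝ, IsProbabilityMeasure μ → IsProbabilityMeasure ν → μ ≠ ν →
      rateI V R (alph fun _ => 0) μ ≠ ⊤ → rateI V R (alph fun _ => 0) ν ≠ ⊤ →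
      ∀ t : ℝ, t ∈ Set.Ioo (0 : ℝ) 1 →
        rateI V R (alph fun _ => 0) (ENNReal.ofReal t • μ + ENNReal.ofReal (1 - t) • ν)
          < ((t * (rateI V R (alph fun _ => 0) μ).toReal
              + (1 - t) * (rateI V R (alph fun _ => 0) ν).toReal : ℝ) : EReal)) := by
  have h0 := (halph (fun _ => 0) continuous_const ⟨0, by simp⟩).1
  refine ⟨fun μ _ => le_antisymm (iSup_le fun lam => ?_) ?_, fun μ ν _ _ hne hμ hν t ht =>
    rateI_strictConvex hV h0 hne hμ hν ht⟩
  · exact integral_sub_phiV_le_rateI hV hR h0 (halph lam.1 lam.2.1 lam.2.2).1 lam.2.1 lam.2.2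
  · by_contra! hlt
    obtain ⟨K, hK, hKI⟩ := EReal.lt_iff_exists_real_btwn.1 hlt
    refine hKI.not_ge ((rateI_le_of_forall_le hV h0
      (K := K - phiV V (fun _ => 0) (alph fun _ => 0) + (alph fun _ => 0) * R)
      fun lam hl hC b hb => ?_).trans_eq (by congr 1; ring))
    obtain ⟨ha, heq⟩ := halph lam hl hC
    have hmin := phiV_sub_le_of_integral_eq hV hR ha hb hl hC heq
    have hsup := EReal.coe_lt_coe_iff.1 ((le_iSup (fun lam : Cb => (((∫ x, lam.1 x ∂μ) -
      (phiV V lam.1 (alph lam.1) - alph lam.1 * R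
        - phiV V (fun _ => 0) (alph fun _ => 0) + (alph fun _ => 0) * R) : ℝ) : EReal))
      ⟨lam, hl, hC⟩).trans_lt hK)
    dsimp only at hsup
    linarith
end
end

section
/- Let V: ℝ → [0,∞) be an Orlicz function, R ∈ (0,∞), and λ: ℝ → ℝ a bounded continuous function. Let α(λ) ∈ (-∞,0) be the unique solution of ∫ V e^{α(λ)V+λ} dx = R ∫ e^{α(λ)V+λ} dx. Then lim_{n→∞} (1/n) log ∫_{B_R^{n,V}} exp( Σ_{i=1}^n λ(x_i) ) d(x_1,…,x_n) = φ_V(α(λ),λ) − α(λ)R. -/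
open MeasureTheory Real Filter Topology ENNReal

noncomputable section

/-- The Orlicz ball `B_R^{n,V} = {x ∈ ℝⁿ : ∑ V(x_k) ≤ R n}`. -/
def OrliczBall (V : ℝ → ℝ) (R : ℝ) (n : ℕ) : Set (Fin n → ℝ) :=
  {x | ∑ i, V (x i) ≤ R * n}

/-- The product of the tilted measures `μ.tilted f` is the tilting of the product measure by
`x ↦ ∑ i, f (x i)`. -/
lemma pi_tilted {ι E : Type*} [Fintype ι] {mE : MeasurableSpace E} (μ : Measure E) [SigmaFinite μ]
    [NeZero μ] {f : E → ℝ} (hf : Integrable (fun x ↦ exp (f x)) μ) :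
    Measure.pi (fun _ : ι ↦ μ.tilted f)
      = (Measure.pi fun _ : ι ↦ μ).tilted (fun x ↦ ∑ i, f (x i)) := by
  have := isProbabilityMeasure_tilted hf
  refine Measure.pi_eq fun s hs ↦ ?_
  rw [tilted_apply_eq_ofReal_integral' _ (MeasurableSet.univ_pi hs), Measure.restrict_pi_pi]
  simp_rw [tilted_apply_eq_ofReal_integral' _ (hs _), exp_sum]
  rw [← ENNReal.ofReal_prod_of_nonneg fun i _ ↦ integral_nonneg fun x ↦ by positivity,
    ← integral_fintype_prod_eq_prod, integral_fintype_prod_eq_pow fun x ↦ exp (f x)]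
  simp [Finset.prod_div_distrib]

/-- A consequence of the central limit theorem: the sum of `n` i.i.d. square-integrable
non-degenerate variables has a probability bounded below of lying in the window of width `√n`
just below its mean. -/
lemma exists_le_pi_sum_near_mean {E : Type*} {mE : MeasurableSpace E} (ν : Measure E)
    [IsProbabilityMeasure ν] {f : E → ℝ} (hf : Measurable f) (hf2 : MemLp f 2 ν)
    (hvar : ProbabilityTheory.variance f ν ≠ 0) :
    ∃ c : ℝ, 0 < c ∧ ∀ᶠ n : ℕ in atTop,
      c ≤ (Measure.pi fun _ : Fin n ↦ ν).real
        {x | n * (∫ y, f y ∂ν) - √n ≤ ∑ i, f (x i) ∧ ∑ i, f (x i) ≤ n * (∫ y, f y ∂ν)} := by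
  set P : Measure (ℕ → E) := Measure.infinitePi fun _ ↦ ν
  set v : NNReal := (ProbabilityTheory.variance f ν).toNNReal
  have hmp (i : ℕ) : MeasurePreserving (fun ω : ℕ → E ↦ ω i) P ν :=
    ⟨measurable_pi_apply i, Measure.infinitePi_map_eval (fun _ ↦ ν) i⟩
  have hlaw (i : ℕ) : P.map (fun ω ↦ f (ω i)) = ν.map f := by
    rw [← (hmp i).map_eq, Measure.map_map hf (measurable_pi_apply i)]
    rfl
  have hident (i : ℕ) : ProbabilityTheory.IdentDistrib (fun ω : ℕ → E ↦ f (ω i))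
      (fun ω ↦ f (ω 0)) P P :=
    ⟨(hf.comp (measurable_pi_apply i)).aemeasurable,
      (hf.comp (measurable_pi_apply 0)).aemeasurable, by rw [hlaw, hlaw]⟩
  have hident0 : ProbabilityTheory.IdentDistrib (fun ω : ℕ → E ↦ f (ω 0)) f P ν :=
    ⟨(hf.comp (measurable_pi_apply 0)).aemeasurable, hf.aemeasurable, hlaw 0⟩
  have hclt := ProbabilityTheory.tendstoInDistribution_inv_sqrt_mul_sum_sub
    (P := P) (P' := ProbabilityTheory.gaussianReal 0 v) (Y := id)
    (X := fun i ω ↦ f (ω i))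
    (by rw [hident0.variance_eq]; exact ProbabilityTheory.HasLaw.id)
    (hident0.memLp_iff.2 hf2)
    (ProbabilityTheory.iIndepFun_infinitePi (X := fun _ ↦ f) fun _ ↦ hf) hident
  have hlim := ProbabilityMeasure.le_liminf_measure_open_of_tendsto hclt.tendsto
    (isOpen_Ioo (a := (-1 : ℝ)) (b := 0))
  have hv : v ≠ 0 := by
    simpa [v, Real.toNNReal_eq_zero] using
      lt_of_le_of_ne (ProbabilityTheory.variance_nonneg f ν) hvar.symm
  have hpos : 0 < ProbabilityTheory.gaussianReal 0 v (Set.Ioo (-1) 0) := by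
    refine pos_iff_ne_zero.2 fun h ↦ ?_
    have := ProbabilityTheory.gaussianReal_absolutelyContinuous' 0 hv h
    simp at this
  obtain ⟨c, hc0, hc⟩ := exists_between hpos
  refine ⟨c.toReal, ENNReal.toReal_pos hc0.ne' hc.ne_top, ?_⟩
  have hev := eventually_lt_of_lt_liminf (lt_of_lt_of_le (by simpa using hc) hlim)
  filter_upwards [hev, eventually_gt_atTop 0] with n hn hn0
  have hmap : P.map (fun ω (i : Fin n) ↦ ω i) = Measure.pi fun _ : Fin n ↦ ν := by
    rw [← Measure.infinitePi_eq_pi]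
    exact Measure.map_infinitePi_infinitePi_of_inj Fin.val_injective
  refine ENNReal.toReal_mono (measure_ne_top _ _) (hn.le.trans ?_)
  rw [← hmap, Measure.map_apply (by fun_prop)]
  swap
  · have hsum : Measurable fun x : Fin n → E ↦ ∑ i, f (x i) := by fun_prop
    exact (measurableSet_le measurable_const hsum).inter (measurableSet_le hsum measurable_const)
  simp only [ProbabilityMeasure.coe_mk]
  rw [Measure.map_apply (by fun_prop) measurableSet_Ioo]
  refine measure_mono fun ω hω ↦ ?_
  have hsq : 0 < √(n : ℝ) := Real.sqrt_pos.2 (by exact_mod_cast hn0)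
  simp only [Set.mem_preimage, Set.mem_Ioo, hident0.integral_eq] at hω
  rw [inv_mul_eq_div, lt_div_iff₀ hsq, div_lt_iff₀ hsq] at hω
  simp only [Set.mem_preimage, Set.mem_ofPred_eq, Fin.sum_univ_eq_sum_range fun i ↦ f (ω i)]
  constructor <;> linarith [hω.1, hω.2]

namespace IsOrlicz

variable {V : ℝ → ℝ}

lemma nonneg_s6 (hV : IsOrlicz V) (x : ℝ) : 0 ≤ V x := hV.2.2.2.2 x

lemma continuous_s6 (hV : IsOrlicz V) : Continuous V :=
  continuousOn_univ.1 (hV.1.continuousOn isOpen_univ)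

/-- An Orlicz function grows at least linearly. -/
lemma mul_abs_sub_one_le (hV : IsOrlicz V) (x : ℝ) : V 1 * (|x| - 1) ≤ V x := by
  have habs : V |x| = V x := by
    rcases abs_choice x with h | h <;> rw [h]
    exact hV.2.1 x
  have h1 := hV.2.2.2.1 1 one_ne_zero
  rcases le_or_gt |x| 1 with hx | hx
  · nlinarith [hV.nonneg_s6 x]
  have hx0 : 0 < |x| := by linarith
  have hconv := hV.1.2 (Set.mem_univ |x|) (Set.mem_univ 0) (inv_nonneg.2 hx0.le)
    (sub_nonneg.2 (inv_le_one_of_one_le₀ hx.le)) (add_sub_cancel _ _)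
  simp only [smul_eq_mul, inv_mul_cancel₀ hx0.ne', mul_zero, add_zero, hV.2.2.1, habs] at hconv
  rw [inv_mul_eq_div, le_div_iff₀ hx0] at hconv
  nlinarith

lemma integrable_exp_mul_s6 (hV : IsOrlicz V) {β : ℝ} (hβ : β < 0) :
    Integrable fun x ↦ exp (β * V x) := by
  have hV1 := hV.2.2.2.1 1 one_ne_zero
  set b : ℝ := -β * V 1
  have hb : 0 < b := mul_pos (neg_pos.2 hβ) hV1
  refine (integrable_inv_one_add_sq.const_mul (exp b * (1 + 2 / b ^ 2))).mono'
    (by have := hV.continuous_s6; fun_prop) (ae_of_all _ fun x ↦ ?_)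
  rw [norm_of_nonneg (exp_pos _).le]
  have hle : β * V x ≤ b - b * |x| := by nlinarith [hV.mul_abs_sub_one_le x]
  have hq := quadratic_le_exp_of_nonneg (mul_nonneg hb.le (abs_nonneg x))
  rw [mul_pow, sq_abs] at hq
  have hbx : 0 ≤ b * |x| := by positivity
  calc exp (β * V x) ≤ exp b * (exp (b * |x|))⁻¹ := by
        rw [← exp_neg, ← exp_add]
        exact exp_le_exp.2 (by linarith)
    _ ≤ exp b * (1 + 2 / b ^ 2) * (1 + x ^ 2)⁻¹ := by
        rw [mul_assoc (exp b)]
        refine mul_le_mul_of_nonneg_left ?_ (exp_pos b).le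
        rw [← div_eq_mul_inv, inv_eq_one_div, div_le_div_iff₀ (exp_pos _) (by positivity), one_mul]
        have h1 : 1 + b ^ 2 * x ^ 2 / 2 ≤ exp (b * |x|) := by linarith
        calc 1 + x ^ 2 ≤ (1 + 2 / b ^ 2) * (1 + b ^ 2 * x ^ 2 / 2) := by
              have : (1 + 2 / b ^ 2) * (1 + b ^ 2 * x ^ 2 / 2)
                  = 1 + x ^ 2 + (b ^ 2 * x ^ 2 / 2 + 2 / b ^ 2) := by field_simp; ring
              rw [this]
              exact le_add_of_nonneg_right (by positivity)
          _ ≤ _ := by gcongr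

lemma integrable_exp_mul_add (hV : IsOrlicz V) {β : ℝ} (hβ : β < 0) {lam : ℝ → ℝ}
    (hlam : Continuous lam) {C : ℝ} (hC : ∀ x, |lam x| ≤ C) :
    Integrable fun x ↦ exp (β * V x + lam x) := by
  refine ((hV.integrable_exp_mul_s6 hβ).mul_const (exp C)).mono'
    (by have := hV.continuous_s6; fun_prop) (ae_of_all _ fun x ↦ ?_)
  rw [norm_of_nonneg (exp_pos _).le, ← exp_add]
  gcongr
  exact (abs_le.1 (hC x)).2

lemma memLp_two_tilted (hV : IsOrlicz V) {β : ℝ} (hβ : β < 0) {lam : ℝ → ℝ}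
    (hlam : Continuous lam) {C : ℝ} (hC : ∀ x, |lam x| ≤ C) :
    MemLp V 2 ((volume : Measure ℝ).tilted fun x ↦ β * V x + lam x) := by
  have hVc := hV.continuous_s6
  have hβ0 := hβ.ne
  rw [memLp_two_iff_integrable_sq hVc.aestronglyMeasurable,
    integrable_tilted_iff (hV.integrable_exp_mul_add hβ hlam hC)]
  refine ((hV.integrable_exp_mul_add (by linarith : β / 2 < 0) hlam hC).const_mul (8 / β ^ 2)).mono'
    (by fun_prop) (ae_of_all _ fun x ↦ ?_)
  have ht : 0 ≤ -(β / 2) * V x := mul_nonneg (by linarith) (hV.nonneg_s6 x)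
  have hq : V x ^ 2 ≤ 8 / β ^ 2 * exp (-(β / 2) * V x) := by
    have := quadratic_le_exp_of_nonneg ht
    rw [div_mul_eq_mul_div, le_div_iff₀ (by positivity)]
    nlinarith
  have hsplit : β * V x + lam x = (β / 2 * V x + lam x) + β / 2 * V x := by ring
  rw [smul_eq_mul, norm_of_nonneg (by positivity)]
  calc exp (β * V x + lam x) * V x ^ 2
      ≤ exp (β * V x + lam x) * (8 / β ^ 2 * exp (-(β / 2) * V x)) := by gcongr
    _ = 8 / β ^ 2 * exp (β / 2 * V x + lam x) := by
        rw [mul_left_comm, ← exp_add]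
        ring_nf

lemma variance_tilted_ne_zero (hV : IsOrlicz V) {β : ℝ} (hβ : β < 0) {lam : ℝ → ℝ}
    (hlam : Continuous lam) {C : ℝ} (hC : ∀ x, |lam x| ≤ C) :
    ProbabilityTheory.variance V ((volume : Measure ℝ).tilted fun x ↦ β * V x + lam x) ≠ 0 := by
  intro h
  have hint := hV.integrable_exp_mul_add hβ hlam hC
  have := isProbabilityMeasure_tilted hint
  have hae := (absolutelyContinuous_tilted hint).ae_le
    (ProbabilityTheory.ae_eq_integral_of_variance_eq_zero (hV.memLp_two_tilted hβ hlam hC) h)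
  have heq := (hV.continuous_s6.ae_eq_iff_eq volume continuous_const).1 hae
  have h01 : V 0 = V 1 := (congrFun heq 0).trans (congrFun heq 1).symm
  exact (hV.2.2.2.1 1 one_ne_zero).ne (hV.2.2.1.symm.trans h01)

end IsOrlicz

/-- The integral over an Orlicz ball as an integral against the product of the tilted measures. -/
lemma setIntegral_exp_sum_eq (V lam : ℝ → ℝ) {α : ℝ}
    (hint : Integrable fun x ↦ exp (α * V x + lam x)) (n : ℕ) (s : Set (Fin n → ℝ)) :
    ∫ x in s, exp (∑ i, lam (x i)) = (∫ x, exp (α * V x + lam x)) ^ n *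
      ∫ x in s, exp (-α * ∑ i, V (x i))
        ∂Measure.pi fun _ : Fin n ↦ (volume : Measure ℝ).tilted fun x ↦ α * V x + lam x := by
  have hZ := (integral_exp_pos hint).ne'
  have hprod : ∫ x : Fin n → ℝ, exp (∑ i, (α * V (x i) + lam (x i)))
      = (∫ x, exp (α * V x + lam x)) ^ n := by
    simp_rw [exp_sum]
    rw [integral_fintype_prod_volume_eq_pow fun x ↦ exp (α * V x + lam x), Fintype.card_fin]
  rw [pi_tilted _ hint, setIntegral_tilted, ← integral_const_mul, ← volume_pi, hprod]
  congr 1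
  ext x
  rw [smul_eq_mul, ← mul_assoc, mul_div_cancel₀ _ (pow_ne_zero n hZ), ← exp_add]
  congr 1
  rw [Finset.sum_add_distrib, ← Finset.mul_sum]
  ring

/-- Exponential bounds for an integral over an Orlicz ball. -/
lemma setIntegral_orliczBall_bounds {V : ℝ → ℝ} (hV : Continuous V) {R α c : ℝ} (hα : α < 0)
    {n : ℕ} (P : Measure (Fin n → ℝ)) [IsProbabilityMeasure P]
    (hc : c ≤ P.real {x | n * R - √n ≤ ∑ i, V (x i) ∧ ∑ i, V (x i) ≤ n * R}) :
    c * exp (-α * (n * R - √n)) ≤ ∫ x in OrliczBall V R n, exp (-α * ∑ i, V (x i)) ∂P ∧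
      ∫ x in OrliczBall V R n, exp (-α * ∑ i, V (x i)) ∂P ≤ exp (-α * (n * R)) := by
  have hB : MeasurableSet (OrliczBall V R n) := measurableSet_le (by fun_prop) (by fun_prop)
  have hbound : ∀ x ∈ OrliczBall V R n,
      ‖exp (-α * ∑ i, V (x i))‖ ≤ exp (-α * (n * R)) := fun x hx ↦ by
    rw [norm_of_nonneg (exp_pos _).le, mul_comm (n : ℝ)]
    exact exp_le_exp.2 (mul_le_mul_of_nonneg_left hx (by linarith))
  have hint : IntegrableOn (fun x : Fin n → ℝ ↦ exp (-α * ∑ i, V (x i))) (OrliczBall V R n) P :=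
    .of_bound (measure_lt_top _ _)
      (Continuous.aestronglyMeasurable (by fun_prop)) _ ((ae_restrict_iff' hB).2 (ae_of_all _ hbound))
  constructor
  · set S : Set (Fin n → ℝ) := {x | n * R - √n ≤ ∑ i, V (x i) ∧ ∑ i, V (x i) ≤ n * R}
    have hsum : Measurable fun x : Fin n → ℝ ↦ ∑ i, V (x i) := by fun_prop
    have hS : MeasurableSet S :=
      (measurableSet_le measurable_const hsum).inter (measurableSet_le hsum measurable_const)
    have hSB : S ⊆ OrliczBall V R n := fun x hx ↦ hx.2.trans_eq (mul_comm _ _)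
    calc c * exp (-α * (n * R - √n)) ≤ exp (-α * (n * R - √n)) * P.real S := by
          rw [mul_comm]
          gcongr
      _ ≤ ∫ x in S, exp (-α * ∑ i, V (x i)) ∂P :=
          setIntegral_ge_of_const_le_real hS (measure_ne_top _ _)
            (fun x hx ↦ exp_le_exp.2 (mul_le_mul_of_nonneg_left hx.1 (by linarith)))
            (hint.mono_set hSB)
      _ ≤ _ := setIntegral_mono_set hint (ae_of_all _ fun x ↦ (exp_pos _).le) hSB.eventuallyLE
  · refine (le_abs_self _).trans
      ((norm_setIntegral_le_of_norm_le_const (measure_lt_top _ _) hbound).trans ?_)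
    exact mul_le_of_le_one_right (exp_pos _).le measureReal_le_one

/-- `(1/n) log ∫_{B_R^{n,V}} exp(∑ λ(x_i)) dx → φ_V(α(λ),λ) - α(λ) R`. -/
theorem stmt6 (V : ℝ → ℝ) (hV : IsOrlicz V) (R : ℝ) (hR : 0 < R)
    (lam : ℝ → ℝ) (hlamCont : Continuous lam) (hlamBdd : ∃ C : ℝ, ∀ x, |lam x| ≤ C)
    (α : ℝ) (hα : α < 0)
    (hαeq : (∫ x : ℝ, V x * Real.exp (α * V x + lam x))
        = R * ∫ x : ℝ, Real.exp (α * V x + lam x)) :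
    Tendsto (fun n : ℕ =>
        (1 / (n : ℝ)) * Real.log (∫ x in OrliczBall V R n, Real.exp (∑ i, lam (x i))))
      atTop (nhds (phiV V lam α - α * R)) := by
  obtain ⟨C, hC⟩ := hlamBdd
  have hint := hV.integrable_exp_mul_add hα hlamCont hC
  have hZ := integral_exp_pos hint
  have hν := isProbabilityMeasure_tilted hint
  set Z : ℝ := ∫ x, exp (α * V x + lam x)
  set ν := (volume : Measure ℝ).tilted fun x ↦ α * V x + lam x
  have hmean : ∫ x, V x ∂ν = R := by
    rw [integral_tilted]
    simp_rw [smul_eq_mul, div_mul_eq_mul_div, mul_comm (exp _)]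
    rw [integral_div, hαeq, mul_div_cancel_right₀ _ hZ.ne']
  obtain ⟨c, hc0, hc⟩ := exists_le_pi_sum_near_mean ν hV.continuous_s6.measurable
    (hV.memLp_two_tilted hα hlamCont hC) (hV.variance_tilted_ne_zero hα hlamCont hC)
  rw [hmean] at hc
  have hinv := tendsto_inv_atTop_nhds_zero_nat (𝕜 := ℝ)
  have hlow : Tendsto (fun n : ℕ ↦ log Z - α * R + (log c * (n : ℝ)⁻¹ + α * √((n : ℝ)⁻¹)))
      atTop (𝓝 (log Z - α * R)) := by
    simpa using ((hinv.const_mul (log c)).add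
      (((continuous_sqrt.tendsto 0).comp hinv).const_mul α)).const_add (log Z - α * R)
  have hlog : ∀ᶠ n : ℕ in atTop,
      log Z - α * R + (log c * (n : ℝ)⁻¹ + α * √((n : ℝ)⁻¹))
          ≤ 1 / (n : ℝ) * log (∫ x in OrliczBall V R n, exp (∑ i, lam (x i))) ∧
        1 / (n : ℝ) * log (∫ x in OrliczBall V R n, exp (∑ i, lam (x i)))
          ≤ log Z - α * R := by
    filter_upwards [hc, eventually_gt_atTop 0] with n hn hn0
    obtain ⟨hl, hu⟩ := setIntegral_orliczBall_bounds hV.continuous_s6 hα _ hn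
    have hn0' : (0 : ℝ) < n := by exact_mod_cast hn0
    have hpos := (mul_pos hc0 (exp_pos _)).trans_le hl
    have hl' := log_le_log (mul_pos hc0 (exp_pos _)) hl
    have hu' := log_le_log hpos hu
    rw [log_mul hc0.ne' (exp_pos _).ne', log_exp] at hl'
    rw [log_exp] at hu'
    rw [setIntegral_exp_sum_eq V lam hint, log_mul (pow_pos hZ n).ne' hpos.ne', Real.log_pow,
      one_div_mul_eq_div, le_div_iff₀ hn0', div_le_iff₀ hn0']
    refine ⟨?_, by linarith⟩
    have hsq : √((n : ℝ)⁻¹) * n = √n := by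
      rw [sqrt_inv, inv_mul_eq_div, div_sqrt]
    have hcn : log c * (n : ℝ)⁻¹ * n = log c := inv_mul_cancel_right₀ hn0'.ne' _
    linear_combination hl' + hcn + α * hsq
  exact tendsto_of_tendsto_of_tendsto_of_le_of_le' hlow tendsto_const_nhds
    (hlog.mono fun _ h ↦ h.1) (hlog.mono fun _ h ↦ h.2)
end
end
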